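/- Let I ⊆ K[x_1, ..., x_n] be an unmixed matroidal ideal of degree 2 with supp(I) = {x_1, ..., x_n}. Then n/2 ≤ ht(I) ≤ n − 1. Moreover, ht(I) = n − 1 if and only if I is the square-free Veronese ideal of degree 2 in x_1, ..., x_n; and ht(I) = n/2 if and only if n is even and I = I_1 · I_2 where I_1 and I_2 are each generated by n/2 distinct variables and have disjoint supports. -/

import Mathlib

/-!
The generators of `I` are the edges of a graph on `Fin n`, and the exchange condition together with
full support says that for an edge `{i, j}` every vertex `k` is adjacent to `i` or to `j`
(`adj_or_adj`). Hence non-adjacency is an equivalence relation: the graph is complete multipartite,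
with parts `part B i`. The minimal primes of `I` are exactly the ideals generated by the variables
outside one part (`exists_varIdeal_le`, `varIdeal_mem_associatedPrimes`), of height `n` minus the
size of the part (`idealHeight_varIdeal`). Unmixedness therefore means that all parts have the same
size `c`, and `ht I = n - c` (`card_part_add_idealHeight`).

As there are at least two disjoint parts, `1 ≤ c` and `2 * c ≤ n`, which gives the bounds. The
equality `ht I = n - 1` means `c = 1`, that is, the graph is complete; the equality `ht I = n / 2`
means `n = 2 * c`, that is, there are exactly two parts, and `I` is the product of the two ideals
generated by them.
-/

open MvPolynomial

/-- The square-free monomial `∏ i in S, X i`. -/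
noncomputable def sqMon {n : ℕ} (K : Type*) [Field K] (S : Finset (Fin n)) :
    MvPolynomial (Fin n) K := ∏ i ∈ S, X i

/-- The basis-exchange property for a family of supports. -/
def ExchangeProp {n : ℕ} (B : Finset (Finset (Fin n))) : Prop :=
  ∀ u ∈ B, ∀ v ∈ B, ∀ i ∈ u, i ∉ v → ∃ j ∈ v, j ∉ u ∧ insert j (u.erase i) ∈ B

/-- `I` is a matroidal ideal of degree `d`, whose minimal monomial generators are the
square-free monomials with supports in `B`. -/
def IsMatroidal {n : ℕ} (K : Type*) [Field K] (I : Ideal (MvPolynomial (Fin n) K))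
    (B : Finset (Finset (Fin n))) (d : ℕ) : Prop :=
  B.Nonempty ∧ (∀ S ∈ B, S.card = d) ∧ ExchangeProp B ∧
    I = Ideal.span (sqMon K '' (B : Set (Finset (Fin n))))

/-- `supp(I) = {x_1, …, x_n}` for a matroidal ideal with generating supports `B`. -/
def FullSupport {n : ℕ} (B : Finset (Finset (Fin n))) : Prop :=
  ∀ i : Fin n, ∃ S ∈ B, i ∈ S

/-- The height of an ideal: the infimum of the heights of the primes containing it. -/
noncomputable def idealHeight {A : Type*} [CommRing A] (I : Ideal A) : ℕ∞ :=
  ⨅ (p : PrimeSpectrum A) (_ : I ≤ p.asIdeal), Order.height p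

/-- The `J`-depth of the ring `A`: the supremum of the lengths of regular sequences
contained in `J`. -/
noncomputable def ringDepth (A : Type*) [CommRing A] (J : Ideal A) : ℕ∞ :=
  ⨆ (rs : {l : List A // (∀ r ∈ l, r ∈ J) ∧ RingTheory.Sequence.IsRegular A l}),
    (rs.1.length : ℕ∞)

/-- A commutative ring is Cohen–Macaulay if at every maximal ideal the depth of the
localization equals its Krull dimension. -/
def IsCohenMacaulayRing (A : Type*) [CommRing A] : Prop :=
  ∀ (p : Ideal A) (hp : p.IsMaximal),
    letI : p.IsPrime := hp.isPrime
    (ringDepth (Localization.AtPrime p)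
        (IsLocalRing.maximalIdeal (Localization.AtPrime p)) : WithBot ℕ∞)
      = ringKrullDim (Localization.AtPrime p)

/-- The arithmetical rank of an ideal. -/
noncomputable def araIdeal {A : Type*} [CommRing A] (I : Ideal A) : ℕ :=
  sInf {m : ℕ | ∃ f : Fin m → A, (Ideal.span (Set.range f)).radical = I.radical}

/-- An ideal is unmixed if all of its associated primes have the same height. -/
def IsUnmixed {A : Type*} [CommRing A] (I : Ideal A) : Prop :=
  ∀ p ∈ associatedPrimes A (A ⧸ I), ∀ q ∈ associatedPrimes A (A ⧸ I),
    idealHeight p = idealHeight q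

/-- The square-free Veronese ideal of degree `d` in all the variables. -/
noncomputable def sqVeronese {n : ℕ} (K : Type*) [Field K] (d : ℕ) :
    Ideal (MvPolynomial (Fin n) K) :=
  Ideal.span (sqMon K '' {S : Finset (Fin n) | S.card = d})

/-- The ordering `u` of the generating supports, together with the variable sets `V`,
witnesses that the square-free monomial ideal generated by `sqMon K ∘ u` has linear
quotients: each colon ideal `⟨u_0, …, u_{j-1}⟩ : u_j` is generated by the variables in
`V j`. -/
def LinearQuotientWitness {n s : ℕ} (K : Type*) [Field K]
    (u : Fin s → Finset (Fin n)) (V : Fin s → Finset (Fin n)) : Prop :=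
  ∀ j : Fin s,
    (Ideal.span (sqMon K '' (u '' {k | k < j}))).colon (Ideal.span {sqMon K (u j)})
      = Ideal.span ((fun i => (X i : MvPolynomial (Fin n) K)) '' (V j : Set (Fin n)))

/-- The linear quotient index `q(I)` attached to a linear quotient witness:
the maximum, over `j ≥ 1`, of the number of variables generating the `j`-th colon ideal. -/
def lqIndex {n s : ℕ} (V : Fin s → Finset (Fin n)) : ℕ :=
  (Finset.univ.filter fun j : Fin s => (j : ℕ) ≠ 0).sup fun j => (V j).card

open CategoryTheory in
/-- The module `M` has projective dimension at most `k`. -/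
def HasProjDimLE {A : Type*} [CommRing A] (M : ModuleCat A) (k : ℕ) : Prop :=
  ∃ P : ProjectiveResolution M, ∀ i : ℕ, k < i → Limits.IsZero (P.complex.X i)

/-- The ideal generated by the variables `X i`, `i ∈ A`. -/
noncomputable def varIdeal {n : ℕ} (K : Type*) [Field K] (A : Finset (Fin n)) :
    Ideal (MvPolynomial (Fin n) K) :=
  Ideal.span ((fun i => (X i : MvPolynomial (Fin n) K)) '' (A : Set (Fin n)))

/-! ### Ideals generated by variables -/

section VarIdeal

variable {n : ℕ} {K : Type*} [Field K]

/-- The substitution of `0` for the variables in `A`. -/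
noncomputable def killVars (K : Type*) [Field K] (A : Finset (Fin n)) :
    MvPolynomial (Fin n) K →ₐ[K] MvPolynomial (Fin n) K :=
  aeval fun i => if i ∈ A then 0 else X i

lemma varIdeal_eq_ker (A : Finset (Fin n)) :
    varIdeal K A = RingHom.ker (killVars K A) := by
  apply le_antisymm
  · rw [varIdeal, Ideal.span_le]
    rintro _ ⟨i, hi, rfl⟩
    have hi' : i ∈ A := hi
    simp [RingHom.mem_ker, killVars, hi']
  · -- Modulo `varIdeal K A` the substitution is the identity, since it is so on the variables.
    have key : (Ideal.Quotient.mkₐ K (varIdeal K A)).comp (killVars K A)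
        = Ideal.Quotient.mkₐ K (varIdeal K A) := by
      apply MvPolynomial.algHom_ext
      intro i
      by_cases hi : i ∈ A
      · have : (X i : MvPolynomial (Fin n) K) ∈ varIdeal K A := Ideal.subset_span ⟨i, hi, rfl⟩
        have h0 := Ideal.Quotient.eq_zero_iff_mem.mpr this
        simp [killVars, hi, h0]
      · simp [killVars, hi]
    intro f hf
    have hf0 : killVars K A f = 0 := hf
    have := DFunLike.congr_fun key f
    rw [AlgHom.comp_apply, hf0, map_zero] at this
    exact Ideal.Quotient.eq_zero_iff_mem.mp this.symm

lemma varIdeal_isPrime (A : Finset (Fin n)) : (varIdeal K A).IsPrime := by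
  rw [varIdeal_eq_ker]
  exact RingHom.ker_isPrime _

lemma X_mem_varIdeal {A : Finset (Fin n)} {i : Fin n} :
    (X i : MvPolynomial (Fin n) K) ∈ varIdeal K A ↔ i ∈ A := by
  rw [varIdeal_eq_ker, RingHom.mem_ker]
  by_cases hi : i ∈ A <;> simp [killVars, hi]

lemma varIdeal_le_iff {A : Finset (Fin n)} {J : Ideal (MvPolynomial (Fin n) K)} :
    varIdeal K A ≤ J ↔ ∀ i ∈ A, (X i : MvPolynomial (Fin n) K) ∈ J := by
  rw [varIdeal, Ideal.span_le]
  simp [Set.subset_def]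

lemma varIdeal_le_varIdeal {A C : Finset (Fin n)} :
    varIdeal K A ≤ varIdeal K C ↔ A ⊆ C := by
  simp [varIdeal_le_iff, X_mem_varIdeal, Finset.subset_iff]

/-- `idealHeight` of a prime is its height in the prime spectrum. -/
lemma idealHeight_asIdeal {A : Type*} [CommRing A] (p : PrimeSpectrum A) :
    idealHeight p.asIdeal = Order.height p :=
  le_antisymm (iInf₂_le p le_rfl) (le_iInf₂ fun _ h => Order.height_mono h)

/-- The lower bound comes from the chain of the ideals generated by fewer and fewer of the
variables, the upper bound from Krull's height theorem. -/
lemma idealHeight_varIdeal (A : Finset (Fin n)) :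
    idealHeight (varIdeal K A) = A.card := by
  have e := idealHeight_asIdeal (⟨varIdeal K A, varIdeal_isPrime A⟩ : PrimeSpectrum _)
  refine e.trans (le_antisymm ?_ ?_)
  · rw [← PrimeSpectrum.height_eq_orderHeight]
    have hp := varIdeal_isPrime (K := K) A
    have h := Ideal.height_le_card_of_mem_minimalPrimes_span
      (R := MvPolynomial (Fin n) K) (p := varIdeal K A)
      (s := (fun i => (X i : MvPolynomial (Fin n) K)) '' (A : Set (Fin n)))
      (A.finite_toSet.image _)
      (by
        change _ ∈ (varIdeal K A).minimalPrimes
        rw [Ideal.minimalPrimes_eq_subsingleton_self]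
        rfl)
    refine h.trans ?_
    exact_mod_cast (Set.ncard_image_le A.finite_toSet).trans (Set.ncard_coe_finset A).le
  · clear e
    induction A using Finset.induction_on with
    | empty => simp
    | insert a s ha ih =>
      rw [Finset.card_insert_of_notMem ha, Nat.cast_add, Nat.cast_one]
      refine (add_le_add_left ih 1).trans (Order.height_add_one_le ?_)
      refine lt_of_le_not_ge ?_ ?_
      · exact varIdeal_le_varIdeal.mpr (Finset.subset_insert a s)
      · intro h
        exact ha (varIdeal_le_varIdeal.mp h (Finset.mem_insert_self a s))

end VarIdeal

/-! ### The complete multipartite graph of a matroid of rank two -/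

section Parts

variable {n : ℕ} {B : Finset (Finset (Fin n))}

/-- The vertices not adjacent to `i`, including `i` itself, in the graph with edge set `B`: the part
containing `i` when the graph is complete multipartite. -/
def part (B : Finset (Finset (Fin n))) (i : Fin n) : Finset (Fin n) :=
  Finset.univ.filter fun j => ({i, j} : Finset (Fin n)) ∉ B

lemma mem_part {i j : Fin n} : j ∈ part B i ↔ ({i, j} : Finset (Fin n)) ∉ B := by
  simp [part]

lemma self_mem_part (hB : ∀ S ∈ B, S.card = 2) (i : Fin n) : i ∈ part B i := by
  rw [mem_part]
  intro h
  simpa using hB _ h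

/-- Full support gives an edge `{l, k}` at `k`, in which the exchange condition replaces `l` by `i` or
by `j`. -/
lemma adj_or_adj (hB : ∀ S ∈ B, S.card = 2) (hex : ExchangeProp B) (hsupp : FullSupport B)
    {i j : Fin n} (hij : ({i, j} : Finset (Fin n)) ∈ B) (k : Fin n) :
    ({i, k} : Finset (Fin n)) ∈ B ∨ ({j, k} : Finset (Fin n)) ∈ B := by
  obtain ⟨S, hS, hk⟩ := hsupp k
  obtain ⟨l, hl⟩ : ∃ l, S.erase k = {l} := by
    rw [← Finset.card_eq_one, Finset.card_erase_of_mem hk, hB S hS]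
  have hlS : l ∈ S.erase k := by simp [hl]
  have hSe : S = {l, k} := by
    rw [← Finset.insert_erase hk, hl, Finset.pair_comm]
  have hlk : l ≠ k := Finset.ne_of_mem_erase hlS
  by_cases h : l ∈ ({i, j} : Finset (Fin n))
  · rw [hSe] at hS
    rcases Finset.mem_insert.mp h with rfl | h
    · exact Or.inl hS
    · rw [Finset.mem_singleton] at h
      subst h
      exact Or.inr hS
  · obtain ⟨m, hm, -, hmB⟩ := hex S hS _ hij l (by simp [hSe]) h
    have he : S.erase l = {k} := by
      rw [hSe, Finset.erase_insert (by simpa using hlk)]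
    rw [he] at hmB
    rcases Finset.mem_insert.mp hm with rfl | h
    · exact Or.inl hmB
    · rw [Finset.mem_singleton] at h
      subst h
      exact Or.inr hmB

lemma part_eq (hB : ∀ S ∈ B, S.card = 2) (hex : ExchangeProp B) (hsupp : FullSupport B)
    {i j : Fin n} (h : j ∈ part B i) : part B j = part B i := by
  rw [mem_part] at h
  ext k
  rw [mem_part, mem_part, not_iff_not]
  constructor
  · intro hjk
    rcases adj_or_adj hB hex hsupp hjk i with h' | h'
    · exact absurd (Finset.pair_comm j i ▸ h') h
    · exact Finset.pair_comm k i ▸ h'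
  · intro hik
    rcases adj_or_adj hB hex hsupp hik j with h' | h'
    · exact absurd h' h
    · exact Finset.pair_comm k j ▸ h'

lemma disjoint_part (hB : ∀ S ∈ B, S.card = 2) (hex : ExchangeProp B) (hsupp : FullSupport B)
    {i j : Fin n} (h : ({i, j} : Finset (Fin n)) ∈ B) : Disjoint (part B i) (part B j) := by
  rw [Finset.disjoint_left]
  intro k hi hj
  have := self_mem_part hB j
  rw [← part_eq hB hex hsupp hj, part_eq hB hex hsupp hi, mem_part] at this
  exact this h

end Parts

/-! ### Primes and height of a matroidal ideal of degree two -/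

section Height

variable {n : ℕ} {K : Type*} [Field K] {I : Ideal (MvPolynomial (Fin n) K)}
  {B : Finset (Finset (Fin n))}

lemma sqMon_pair {i j : Fin n} (h : i ≠ j) :
    sqMon K ({i, j} : Finset (Fin n)) = X i * X j :=
  Finset.prod_pair h

lemma mul_mem (hI : IsMatroidal K I B 2) {i j : Fin n}
    (h : ({i, j} : Finset (Fin n)) ∈ B) : (X i * X j : MvPolynomial (Fin n) K) ∈ I := by
  have hne : i ≠ j := by
    rintro rfl
    simpa using hI.2.1 _ h
  rw [← sqMon_pair hne, hI.2.2.2]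
  exact Ideal.subset_span ⟨_, h, rfl⟩

lemma le_iff_mul_mem (hI : IsMatroidal K I B 2) {J : Ideal (MvPolynomial (Fin n) K)} :
    I ≤ J ↔ ∀ i j, ({i, j} : Finset (Fin n)) ∈ B → (X i * X j : MvPolynomial (Fin n) K) ∈ J := by
  refine ⟨fun h i j hij => h (mul_mem hI hij), fun h => ?_⟩
  rw [hI.2.2.2, Ideal.span_le]
  rintro _ ⟨S, hS, rfl⟩
  obtain ⟨i, j, hne, rfl⟩ := Finset.card_eq_two.mp (hI.2.1 S hS)
  rw [sqMon_pair hne]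
  exact h i j hS

lemma le_varIdeal_compl_part (hI : IsMatroidal K I B 2) (hsupp : FullSupport B) (i : Fin n) :
    I ≤ varIdeal K (part B i)ᶜ := by
  rw [le_iff_mul_mem hI]
  intro a b hab
  by_cases ha : a ∈ part B i
  · refine Ideal.mul_mem_left _ _ (X_mem_varIdeal.mpr ?_)
    rw [Finset.mem_compl, ← part_eq hI.2.1 hI.2.2.1 hsupp ha, mem_part]
    exact fun h => h hab
  · exact Ideal.mul_mem_right _ _ (X_mem_varIdeal.mpr (Finset.mem_compl.mpr ha))

/-- If `X i` is outside the prime `p`, then `p` contains `X j` for every edge `{i, j}`. -/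
lemma exists_varIdeal_le (hI : IsMatroidal K I B 2) (hn : Nonempty (Fin n))
    {p : Ideal (MvPolynomial (Fin n) K)} (hp : p.IsPrime) (h : I ≤ p) :
    ∃ i, varIdeal K (part B i)ᶜ ≤ p := by
  by_cases hX : ∃ i, (X i : MvPolynomial (Fin n) K) ∉ p
  · obtain ⟨i, hi⟩ := hX
    refine ⟨i, varIdeal_le_iff.mpr fun j hj => ?_⟩
    rw [Finset.mem_compl, mem_part, not_not] at hj
    exact (hp.mem_or_mem (h (mul_mem hI hj))).resolve_left hi
  · push Not at hX
    exact ⟨hn.some, varIdeal_le_iff.mpr fun j _ => hX j⟩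

lemma varIdeal_mem_associatedPrimes (hI : IsMatroidal K I B 2) (hsupp : FullSupport B)
    (i : Fin n) : varIdeal K (part B i)ᶜ ∈
      associatedPrimes (MvPolynomial (Fin n) K) (MvPolynomial (Fin n) K ⧸ I) := by
  apply Module.associatedPrimes.minimalPrimes_annihilator_subset_associatedPrimes
  rw [Ideal.annihilator_quotient]
  refine ⟨⟨varIdeal_isPrime _, le_varIdeal_compl_part hI hsupp i⟩, fun q hq hqi => ?_⟩
  obtain ⟨j, hj⟩ := exists_varIdeal_le hI ⟨i⟩ hq.1 hq.2
  have hsub := varIdeal_le_varIdeal.mp (hj.trans hqi)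
  -- The part of `j` contains that of `i`, hence `i`, so the two parts agree.
  have hi : i ∈ part B j := by
    by_contra hij
    exact Finset.mem_compl.mp (hsub (Finset.mem_compl.mpr hij)) (self_mem_part hI.2.1 i)
  rwa [part_eq hI.2.1 hI.2.2.1 hsupp hi]

lemma card_part_eq (hI : IsMatroidal K I B 2) (hsupp : FullSupport B) (hun : IsUnmixed I)
    (i j : Fin n) : (part B i).card = (part B j).card := by
  have h := hun _ (varIdeal_mem_associatedPrimes hI hsupp i) _
    (varIdeal_mem_associatedPrimes hI hsupp j)
  rw [idealHeight_varIdeal, idealHeight_varIdeal, Nat.cast_inj] at h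
  have hi := Finset.card_add_card_compl (part B i)
  have hj := Finset.card_add_card_compl (part B j)
  omega

lemma idealHeight_mono {A : Type*} [CommRing A] {J J' : Ideal A} (h : J ≤ J') :
    idealHeight J ≤ idealHeight J' :=
  le_iInf₂ fun p hp => iInf₂_le p (h.trans hp)

lemma card_part_add_idealHeight (hI : IsMatroidal K I B 2) (hsupp : FullSupport B)
    (hun : IsUnmixed I) (i : Fin n) :
    ∃ h : ℕ, idealHeight I = h ∧ (part B i).card + h = n := by
  refine ⟨(part B i)ᶜ.card, le_antisymm ?_ ?_, ?_⟩
  · rw [← idealHeight_varIdeal (K := K)]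
    exact idealHeight_mono (le_varIdeal_compl_part hI hsupp i)
  · refine le_iInf₂ fun p hp => ?_
    obtain ⟨j, hj⟩ := exists_varIdeal_le hI ⟨i⟩ p.isPrime hp
    have hc : (part B i)ᶜ.card = (part B j)ᶜ.card := by
      rw [Finset.card_compl, Finset.card_compl, card_part_eq hI hsupp hun i j]
    rw [hc, ← idealHeight_varIdeal (K := K), ← idealHeight_asIdeal]
    exact idealHeight_mono hj
  · simp

/-- The monomial `X i * X j` lies in `I` only for an edge `{i, j}`, as otherwise it avoids the prime
generated by the variables outside the common part of `i` and `j`. -/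
lemma pair_mem_of_mul_mem (hI : IsMatroidal K I B 2) (hsupp : FullSupport B) {i j : Fin n}
    (h : (X i * X j : MvPolynomial (Fin n) K) ∈ I) : ({i, j} : Finset (Fin n)) ∈ B := by
  rcases (varIdeal_isPrime _).mem_or_mem (le_varIdeal_compl_part hI hsupp i h) with h | h
  · rw [X_mem_varIdeal, Finset.mem_compl] at h
    exact absurd (self_mem_part hI.2.1 i) h
  · rw [X_mem_varIdeal, Finset.mem_compl, mem_part, not_not] at h
    exact h

lemma eq_sqVeronese_iff (hI : IsMatroidal K I B 2) (hsupp : FullSupport B) :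
    I = sqVeronese K 2 ↔ ∀ i, part B i = {i} := by
  constructor
  · intro h i
    ext j
    rw [mem_part, Finset.mem_singleton]
    constructor
    · intro hij
      by_contra hne
      refine hij (pair_mem_of_mul_mem hI hsupp ?_)
      rw [h, ← sqMon_pair (Ne.symm hne)]
      exact Ideal.subset_span ⟨_, Finset.card_pair (Ne.symm hne), rfl⟩
    · rintro rfl
      exact mem_part.mp (self_mem_part hI.2.1 j)
  · intro h
    have hBe : (B : Set (Finset (Fin n))) = {S | S.card = 2} := by
      ext S
      refine ⟨fun hS => hI.2.1 S hS, fun hS => ?_⟩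
      obtain ⟨i, j, hne, rfl⟩ := Finset.card_eq_two.mp hS
      have : j ∉ part B i := by
        rw [h i, Finset.mem_singleton]
        exact hne.symm
      rw [mem_part, not_not] at this
      exact this
    rw [hI.2.2.2, sqVeronese, hBe]

/-- If two parts cover everything, then the edges are the pairs with one vertex in each. -/
lemma eq_mul_varIdeal (hI : IsMatroidal K I B 2) (hsupp : FullSupport B) {a b : Fin n}
    (hab : ({a, b} : Finset (Fin n)) ∈ B) (hcov : part B a ∪ part B b = Finset.univ) :
    I = varIdeal K (part B a) * varIdeal K (part B b) := by
  have hdis := disjoint_part hI.2.1 hI.2.2.1 hsupp hab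
  have hcov' : ∀ k, k ∈ part B a ∨ k ∈ part B b := fun k =>
    Finset.mem_union.mp (hcov ▸ Finset.mem_univ k)
  apply le_antisymm
  · rw [le_iff_mul_mem hI]
    intro i j hij
    have hd := disjoint_part hI.2.1 hI.2.2.1 hsupp hij
    have hj := self_mem_part hI.2.1 j
    have hi := self_mem_part hI.2.1 i
    rcases hcov' i with h1 | h1 <;> rcases hcov' j with h2 | h2
    · rw [part_eq hI.2.1 hI.2.2.1 hsupp h1, part_eq hI.2.1 hI.2.2.1 hsupp h2] at hd
      exact absurd h1 (Finset.disjoint_left.mp hd h1)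
    · exact Ideal.mul_mem_mul (X_mem_varIdeal.mpr h1) (X_mem_varIdeal.mpr h2)
    · rw [mul_comm (X i)]
      exact Ideal.mul_mem_mul (X_mem_varIdeal.mpr h2) (X_mem_varIdeal.mpr h1)
    · rw [part_eq hI.2.1 hI.2.2.1 hsupp h1, part_eq hI.2.1 hI.2.2.1 hsupp h2] at hd
      exact absurd h1 (Finset.disjoint_left.mp hd h1)
  · rw [varIdeal, varIdeal, Ideal.span_mul_span', Ideal.span_le]
    rintro _ ⟨_, ⟨i, hi, rfl⟩, _, ⟨j, hj, rfl⟩, rfl⟩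
    refine mul_mem hI ?_
    have : j ∉ part B i := by
      rw [part_eq hI.2.1 hI.2.2.1 hsupp hi]
      exact Finset.disjoint_right.mp hdis hj
    rw [mem_part, not_not] at this
    exact this

end Height

/-- Let `I ⊆ K[x_1, …, x_n]` be an unmixed matroidal ideal of degree `2`
with `supp(I) = {x_1, …, x_n}`.  Then `n/2 ≤ ht(I) ≤ n − 1`.  Moreover `ht(I) = n − 1`
iff `I` is the square-free Veronese ideal of degree `2`, and `ht(I) = n/2` iff `n` is even
and `I = I_1·I_2` with `I_1, I_2` each generated by `n/2` distinct variables with disjoint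
supports. -/
theorem statement7 {K : Type*} [Field K] {n : ℕ}
    {I : Ideal (MvPolynomial (Fin n) K)} {B : Finset (Finset (Fin n))}
    (hI : IsMatroidal K I B 2) (hsupp : FullSupport B) (hun : IsUnmixed I) :
    ((n : ℕ∞) ≤ 2 * idealHeight I ∧ idealHeight I ≤ ((n - 1 : ℕ) : ℕ∞)) ∧
    (idealHeight I = ((n - 1 : ℕ) : ℕ∞) ↔ I = sqVeronese K 2) ∧
    (2 * idealHeight I = (n : ℕ∞) ↔
      Even n ∧ ∃ A C : Finset (Fin n), Disjoint A C ∧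
        A.card = n / 2 ∧ C.card = n / 2 ∧ I = varIdeal K A * varIdeal K C) := by
  have hex := hI.2.2.1
  obtain ⟨S, hS⟩ := hI.1
  obtain ⟨a, b, -, rfl⟩ := Finset.card_eq_two.mp (hI.2.1 S hS)
  have hdis := disjoint_part hI.2.1 hex hsupp hS
  have hcard : (part B a ∪ part B b).card = (part B a).card + (part B b).card :=
    Finset.card_union_of_disjoint hdis
  have hab := card_part_eq hI hsupp hun a b
  have hle : (part B a ∪ part B b).card ≤ n := by
    simpa using Finset.card_le_univ (part B a ∪ part B b)
  have hpos : 0 < (part B a).card := Finset.card_pos.mpr ⟨a, self_mem_part hI.2.1 a⟩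
  obtain ⟨h, hh, hsum⟩ := card_part_add_idealHeight hI hsupp hun a
  have hbound : n ≤ 2 * h := by omega
  rw [eq_sqVeronese_iff hI hsupp]
  refine ⟨⟨?_, ?_⟩, ⟨fun H => ?_, fun H => ?_⟩, ⟨fun H => ?_, ?_⟩⟩
  · rw [hh]
    exact_mod_cast hbound
  · rw [hh, Nat.cast_le]
    omega
  · rw [hh, Nat.cast_inj] at H
    intro i
    have hi := card_part_eq hI hsupp hun i a
    obtain ⟨x, hx⟩ := Finset.card_eq_one.mp (show (part B i).card = 1 by omega)
    have := self_mem_part hI.2.1 i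
    rw [hx, Finset.mem_singleton] at this
    rw [hx, this]
  · have := H a
    rw [hh, Nat.cast_inj]
    rw [this, Finset.card_singleton] at hsum
    omega
  · have H' : 2 * h = n := by
      rw [hh] at H
      exact_mod_cast H
    refine ⟨⟨h, by omega⟩, part B a, part B b, hdis, by omega, by omega,
      eq_mul_varIdeal hI hsupp hS ?_⟩
    apply Finset.eq_univ_of_card
    rw [Fintype.card_fin]
    omega
  · rintro ⟨he, A, C, -, hA, -, hIAC⟩
    have hhA : idealHeight I ≤ A.card := by
      rw [← idealHeight_varIdeal (K := K), hIAC]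
      exact idealHeight_mono Ideal.mul_le_left
    rw [hh, hA, Nat.cast_le] at hhA
    rw [hh]
    have : 2 * h = n := by omega
    exact_mod_cast this
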